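/- arXiv:2405.03143 — 6 statements merged into one kernel-verified Lean document; each statement's English description precedes it below -/
import Mathlib

section
/- For every α ∈ (1,2): s_k^{(α)} = s_{−k}^{(α)} for all integers k ≥ 1, and moreover s_0^{(α)} > 0 and s_1^{(α)} < 0. -/
/-- The fourth-order coefficients `s_k^{(α)}`. -/
noncomputable def sCoef (α : ℝ) (k : ℤ) : ℝ :=
  ((-1 : ℝ) ^ k * Real.Gamma (α + 1) /
      (Real.Gamma (α / 2 - k + 1) * Real.Gamma (α / 2 + k + 1))) *
    (1 + α * (α + 1) * (α + 2) / (6 * (α - 2 * k + 2) * (α + 2 * k + 2)))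

open Real

theorem sCoef_neg (α : ℝ) (k : ℤ) : sCoef α (-k) = sCoef α k := by
  have sign_neg : (-1 : ℝ) ^ (-k) = (-1) ^ k := by rw [← inv_zpow', inv_neg_one]
  simp only [sCoef, sign_neg, Int.cast_neg, mul_neg, sub_neg_eq_add, ← sub_eq_add_neg]
  rw [mul_comm (Gamma (α / 2 + k + 1)), mul_right_comm 6 (α + 2 * k + 2)]

theorem sCoef_zero {α : ℝ} (hα : α ≠ -2) :
    sCoef α 0 = Gamma (α + 1) / Gamma (α / 2 + 1) ^ 2 * ((α + 3) * (α + 4) / (6 * (α + 2))) := by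
  have h_add_two : α + 2 ≠ 0 := fun h ↦ hα (eq_neg_of_add_eq_zero_left h)
  have correction : 1 + α * (α + 1) * (α + 2) / (6 * (α + 2) * (α + 2)) =
      (α + 3) * (α + 4) / (6 * (α + 2)) := by
    field_simp
    ring
  simp only [sCoef, Int.cast_zero, zpow_zero, mul_zero, sub_zero, add_zero, one_mul, correction,
    ← sq]

theorem sCoef_one {α : ℝ} (hα₀ : α ≠ 0) (hα₄ : α ≠ -4) :
    sCoef α 1 = -(Gamma (α + 1) / (Gamma (α / 2) * Gamma (α / 2 + 2)) *
      ((α ^ 2 + 9 * α + 26) / (6 * (α + 4)))) := by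
  have h_add_four : α + 4 ≠ 0 := fun h ↦ hα₄ (eq_neg_of_add_eq_zero_left h)
  have correction : 1 + α * (α + 1) * (α + 2) / (6 * α * (α + 4)) =
      (α ^ 2 + 9 * α + 26) / (6 * (α + 4)) := by
    field_simp
    ring
  rw [← correction, sCoef, Int.cast_one, zpow_one]
  ring_nf

theorem sCoef_zero_pos {α : ℝ} (hα : -1 < α) : 0 < sCoef α 0 := by
  have h_Gamma : 0 < Gamma (α + 1) := Gamma_pos_of_pos (by linarith)
  have h_Gamma_half : 0 < Gamma (α / 2 + 1) := Gamma_pos_of_pos (by linarith)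
  have h_two : 0 < α + 2 := by linarith
  have h_three : 0 < α + 3 := by linarith
  have h_four : 0 < α + 4 := by linarith
  rw [sCoef_zero (by linarith)]
  positivity

theorem sCoef_one_neg {α : ℝ} (hα : 0 < α) : sCoef α 1 < 0 := by
  rw [sCoef_one hα.ne' (by linarith), neg_lt_zero]
  positivity

theorem stmt_0_general {α : ℝ} (hα : 0 < α) :
    (∀ k : ℤ, sCoef α k = sCoef α (-k)) ∧ 0 < sCoef α 0 ∧ sCoef α 1 < 0 :=
  ⟨fun k ↦ (sCoef_neg α k).symm, sCoef_zero_pos (by linarith), sCoef_one_neg hα⟩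

theorem stmt_0 (α : ℝ) (hα : α ∈ Set.Ioo (1 : ℝ) 2) :
    (∀ k : ℤ, 1 ≤ k → sCoef α k = sCoef α (-k)) ∧
      0 < sCoef α 0 ∧ sCoef α 1 < 0 := by
  obtain ⟨symmetric, signs⟩ := stmt_0_general (zero_lt_one.trans hα.1)
  exact ⟨fun k _ ↦ symmetric k, signs⟩
end

section
/- There exists α* ∈ (1.65, 1.66) such that for every α ∈ (1, α*) one has s_2^{(α)} < 0, and for every α ∈ [α*, 2) one has s_2^{(α)} ≥ 0. -/
/-!
The denominators `α ∓ 2k + 2` are absorbed by `Γ(x + 1) = x Γ(x)`, so that `s_k` becomes a quotient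
of Gamma values times a cubic in `α`. For `k = 2` and `0 < α` the quotient is positive, and the
cubic is strictly increasing with a root between `1.65` and `1.66`.
-/

open SignType (sign)

/-- The cubic factor of `s_k^{(α)}`: the numerator of the bracket in `sCoef` over the common
denominator `6 (α - 2k + 2) (α + 2k + 2)`. -/
def sNumerator (α : ℝ) (k : ℤ) : ℝ :=
  6 * (α - 2 * k + 2) * (α + 2 * k + 2) + α * (α + 1) * (α + 2)

lemma sCoef_eq_Gamma_mul_sNumerator {α : ℝ} {k : ℤ}
    (h_sub : α - 2 * k + 2 ≠ 0) (h_add : α + 2 * k + 2 ≠ 0) :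
    sCoef α k = (-1) ^ k * Real.Gamma (α + 1) /
      (24 * (Real.Gamma (α / 2 - k + 2) * Real.Gamma (α / 2 + k + 2))) * sNumerator α k := by
  have Gamma_sub : Real.Gamma (α / 2 - k + 2) =
      (α - 2 * k + 2) / 2 * Real.Gamma (α / 2 - k + 1) := by
    convert Real.Gamma_add_one (div_ne_zero h_sub two_ne_zero) using 2 <;> ring_nf
  have Gamma_add : Real.Gamma (α / 2 + k + 2) =
      (α + 2 * k + 2) / 2 * Real.Gamma (α / 2 + k + 1) := by
    convert Real.Gamma_add_one (div_ne_zero h_add two_ne_zero) using 2 <;> ring_nf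
  have bracket : 1 + α * (α + 1) * (α + 2) / (6 * (α - 2 * k + 2) * (α + 2 * k + 2)) =
      sNumerator α k / (6 * (α - 2 * k + 2) * (α + 2 * k + 2)) :=
    one_add_div (by positivity)
  rw [sCoef, bracket, Gamma_sub, Gamma_add, div_mul_div_comm, div_mul_eq_mul_div]
  congr 1
  ring

lemma sign_sCoef_of_even {α : ℝ} {k : ℤ} (hk : Even k) (hα : -1 < α)
    (h_abs : 2 * |(k : ℝ)| < α + 4)
    (h_sub : α - 2 * k + 2 ≠ 0) (h_add : α + 2 * k + 2 ≠ 0) :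
    sign (sCoef α k) = sign (sNumerator α k) := by
  have := le_abs_self (k : ℝ)
  have := neg_abs_le (k : ℝ)
  have hΓ : 0 < Real.Gamma (α + 1) := Real.Gamma_pos_of_pos (by linarith)
  have hΓ_sub : 0 < Real.Gamma (α / 2 - k + 2) := Real.Gamma_pos_of_pos (by linarith)
  have hΓ_add : 0 < Real.Gamma (α / 2 + k + 2) := Real.Gamma_pos_of_pos (by linarith)
  rw [sCoef_eq_Gamma_mul_sNumerator h_sub h_add, hk.neg_one_zpow, sign_mul,
    sign_pos (by positivity), one_mul]

lemma sNumerator_sub_sNumerator (x y : ℝ) (k : ℤ) :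
    sNumerator x k - sNumerator y k =
      (x - y) * (x ^ 2 + x * y + y ^ 2 + 9 * (x + y) + 26) := by
  simp only [sNumerator]
  ring

lemma sign_sNumerator_sub_sNumerator {x y : ℝ} (hx : 0 ≤ x) (hy : 0 ≤ y) (k : ℤ) :
    sign (sNumerator x k - sNumerator y k) = sign (x - y) := by
  have hpos : 0 < x ^ 2 + x * y + y ^ 2 + 9 * (x + y) + 26 := by positivity
  rw [sNumerator_sub_sNumerator, sign_mul, sign_pos hpos, mul_one]

lemma exists_sNumerator_two_eq_zero : ∃ α ∈ Set.Ioo (1.65 : ℝ) 1.66, sNumerator α 2 = 0 := by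
  have hcont : Continuous (sNumerator · 2) := by unfold sNumerator; fun_prop
  exact intermediate_value_Ioo (by norm_num) hcont.continuousOn
    (by constructor <;> norm_num [sNumerator])

theorem stmt_1_general :
    ∃ αstar ∈ Set.Ioo (1.65 : ℝ) 1.66,
      ∀ α : ℝ, 0 < α → α ≠ 2 → sign (sCoef α 2) = sign (α - αstar) := by
  obtain ⟨αstar, hmem, hroot⟩ := exists_sNumerator_two_eq_zero
  refine ⟨αstar, hmem, fun α hα hα2 => ?_⟩
  have hαstar : 0 ≤ αstar := le_trans (by norm_num) hmem.1.le
  calc sign (sCoef α 2)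
      = sign (sNumerator α 2) := by
        apply sign_sCoef_of_even even_two <;> push_cast
        · linarith
        · norm_num; linarith
        · contrapose! hα2; linarith
        · positivity
    _ = sign (sNumerator α 2 - sNumerator αstar 2) := by rw [hroot, sub_zero]
    _ = sign (α - αstar) := sign_sNumerator_sub_sNumerator hα.le hαstar 2

theorem stmt_1 :
    ∃ αstar : ℝ, αstar ∈ Set.Ioo (1.65 : ℝ) 1.66 ∧
      (∀ α ∈ Set.Ioo (1 : ℝ) αstar, sCoef α 2 < 0) ∧
      (∀ α ∈ Set.Ico αstar (2 : ℝ), 0 ≤ sCoef α 2) := by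
  obtain ⟨αstar, hmem, hsign⟩ := stmt_1_general
  have ⟨hlower, hupper⟩ := hmem
  refine ⟨αstar, hmem, fun α ⟨h1, hlt⟩ => ?_, fun α ⟨hle, h2⟩ => ?_⟩
  · rw [← sign_eq_neg_one_iff, hsign α (by linarith) (by linarith), sign_neg (by linarith)]
  · rw [← sign_nonneg_iff, hsign α (by linarith) h2.ne, sign_nonneg_iff]
    linarith
end

section
/- For every α ∈ (1,2) and every integer k with k ≥ 3, s_k^{(α)} < 0 (and hence also s_{−k}^{(α)} < 0). -/
/-!
Write `s_k = g_k * c_k` with `g_k` the Gamma quotient and `c_k` the rational factor. Euler's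
reflection formula moves `Γ(α/2 - k + 1)` into the numerator and absorbs the alternating sign:
for `k > α/2`,
`g_k = -(sin (π α / 2) / π) Γ(α + 1) Γ(k - α/2) / Γ(k + α/2 + 1)`,
which is negative for `0 < α < 2`. The denominator of `c_k` is `-6 ((2k)² - (α + 2)²)`, at most
`-120` when `k ≥ 3` and `|α| ≤ 2`, while the numerator is at most `24`, so `c_k > 0`.
-/

open Real

/-- The coefficient `g_k^{(α)}` of the second-order fractional centred difference of order `α`, the
first factor of `sCoef`. -/
noncomputable def centeredDiffCoef (α : ℝ) (k : ℤ) : ℝ :=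
  (-1) ^ k * Gamma (α + 1) / (Gamma (α / 2 - k + 1) * Gamma (α / 2 + k + 1))

/-- The rational factor turning `centeredDiffCoef` into the fourth-order coefficient `sCoef`. Its
dependence on `k` is rational, so `k` is allowed to be real. -/
noncomputable def fourthOrderFactor (α k : ℝ) : ℝ :=
  1 + α * (α + 1) * (α + 2) / (6 * (α - 2 * k + 2) * (α + 2 * k + 2))

lemma sCoef_eq_mul (α : ℝ) (k : ℤ) :
    sCoef α k = centeredDiffCoef α k * fourthOrderFactor α k := rfl

lemma centeredDiffCoef_even (α : ℝ) : (centeredDiffCoef α).Even := by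
  intro k
  have sign_even : (-1 : ℝ) ^ (-k) = (-1) ^ k := by rw [zpow_neg, ← inv_zpow, inv_neg_one]
  simp only [centeredDiffCoef, sign_even, Int.cast_neg, sub_neg_eq_add, ← sub_eq_add_neg]
  rw [mul_comm (Gamma (α / 2 + k + 1))]

lemma fourthOrderFactor_even (α : ℝ) : (fourthOrderFactor α).Even := by
  intro k
  simp only [fourthOrderFactor]
  ring_nf

lemma sCoef_even (α : ℝ) : (sCoef α).Even := by
  intro k
  rw [sCoef_eq_mul, sCoef_eq_mul, centeredDiffCoef_even, Int.cast_neg, fourthOrderFactor_even]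

-- At the poles `s = 0, -1, -2, …` both sides are `0`, as `Gamma s = 0` and `0⁻¹ = 0` there.
lemma inv_Gamma_eq_Gamma_one_sub_mul_sin {s : ℝ} (hs : s < 1) :
    (Gamma s)⁻¹ = Gamma (1 - s) * sin (π * s) / π := by
  have gamma_ne : Gamma (1 - s) ≠ 0 := (Gamma_pos_of_pos (sub_pos.mpr hs)).ne'
  have reflection : (Gamma s)⁻¹ * (Gamma (1 - s))⁻¹ = sin (π * s) / π := by
    rw [← mul_inv, Gamma_mul_Gamma_one_sub, inv_div]
  rw [mul_div_assoc, ← reflection, mul_comm, inv_mul_cancel_right₀ gamma_ne]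

lemma neg_one_zpow_mul_sin_shift (α : ℝ) (k : ℤ) :
    (-1) ^ k * sin (π * (α / 2 - k + 1)) = -sin (π * α / 2) := by
  have shift : π * (α / 2 - k + 1) = π * α / 2 - k * π + π := by ring
  rw [shift, sin_add_pi, sin_sub_int_mul_pi, mul_neg, ← mul_assoc, ← mul_zpow]
  norm_num

lemma centeredDiffCoef_eq_neg_sin_mul {α : ℝ} {k : ℤ} (hk : α / 2 < k) :
    centeredDiffCoef α k =
      -(sin (π * α / 2) / π * (Gamma (α + 1) * Gamma (k - α / 2) / Gamma (α / 2 + k + 1))) := by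
  have reflected := inv_Gamma_eq_Gamma_one_sub_mul_sin (s := α / 2 - k + 1) (by linarith)
  rw [show 1 - (α / 2 - k + 1) = k - α / 2 by ring] at reflected
  calc centeredDiffCoef α k
      = (-1) ^ k * Gamma (α + 1) * ((Gamma (α / 2 - k + 1))⁻¹ * (Gamma (α / 2 + k + 1))⁻¹) := by
        rw [centeredDiffCoef, div_eq_mul_inv, mul_inv]
    _ = (-1) ^ k * sin (π * (α / 2 - k + 1)) / π *
          (Gamma (α + 1) * Gamma (k - α / 2) / Gamma (α / 2 + k + 1)) := by
        rw [reflected]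
        ring
    _ = _ := by rw [neg_one_zpow_mul_sin_shift, neg_div, neg_mul]

lemma centeredDiffCoef_neg_of_sin_pos {α : ℝ} {k : ℤ} (hα : -1 < α)
    (hsin : 0 < sin (π * α / 2)) (hk : α / 2 < k) : centeredDiffCoef α k < 0 := by
  have gamma_order : 0 < Gamma (α + 1) := Gamma_pos_of_pos (by linarith)
  have gamma_sub : 0 < Gamma (k - α / 2) := Gamma_pos_of_pos (by linarith)
  have gamma_add : 0 < Gamma (α / 2 + k + 1) := Gamma_pos_of_pos (by linarith)
  rw [centeredDiffCoef_eq_neg_sin_mul hk, neg_lt_zero]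
  exact mul_pos (div_pos hsin pi_pos) (div_pos (mul_pos gamma_order gamma_sub) gamma_add)

lemma centeredDiffCoef_neg {α : ℝ} (hα : α ∈ Set.Ioo 0 2) {k : ℤ} (hk : 1 ≤ k) :
    centeredDiffCoef α k < 0 := by
  obtain ⟨α_pos, α_lt⟩ := hα
  have k_ge : (1 : ℝ) ≤ k := mod_cast hk
  have sin_pos : 0 < sin (π * α / 2) :=
    sin_pos_of_pos_of_lt_pi (by positivity) (by nlinarith [pi_pos])
  exact centeredDiffCoef_neg_of_sin_pos (by linarith) sin_pos (by linarith)

lemma fourthOrderFactor_pos_iff {α k : ℝ} (h : |α + 2| < 2 * k) :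
    0 < fourthOrderFactor α k ↔
      α * (α + 1) * (α + 2) < 6 * ((2 * k) ^ 2 - (α + 2) ^ 2) := by
  have gap_pos : 0 < 6 * ((2 * k) ^ 2 - (α + 2) ^ 2) := by
    linarith [sq_lt_sq' (abs_lt.mp h).1 (abs_lt.mp h).2]
  have factor_eq : fourthOrderFactor α k =
      1 - α * (α + 1) * (α + 2) / (6 * ((2 * k) ^ 2 - (α + 2) ^ 2)) := by
    have denominator_eq : 6 * (α - 2 * k + 2) * (α + 2 * k + 2) =
        -(6 * ((2 * k) ^ 2 - (α + 2) ^ 2)) := by ring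
    rw [fourthOrderFactor, denominator_eq, div_neg, ← sub_eq_add_neg]
  rw [factor_eq, sub_pos, div_lt_one gap_pos]

lemma fourthOrderFactor_pos {α k : ℝ} (hα : |α| ≤ 2) (hk : 3 ≤ k) :
    0 < fourthOrderFactor α k := by
  obtain ⟨α_ge, α_le⟩ := abs_le.mp hα
  have abs_add_le : |α + 2| ≤ 4 := abs_le.mpr ⟨by linarith, by linarith⟩
  have numerator_le : α * (α + 1) * (α + 2) ≤ 24 := by
    have quadratic_le : α * (α + 1) ≤ 6 := by nlinarith
    nlinarith
  have gap_ge : 20 ≤ (2 * k) ^ 2 - (α + 2) ^ 2 := by nlinarith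
  exact (fourthOrderFactor_pos_iff (by linarith)).mpr (by linarith)

theorem stmt_2_general {α : ℝ} (hα : α ∈ Set.Ioo 0 2) {k : ℤ} (hk : 3 ≤ |k|) :
    sCoef α k < 0 := by
  wlog k_nonneg : 0 ≤ k generalizing k
  · rw [← sCoef_even]
    exact this (by rwa [abs_neg]) (by lia)
  rw [abs_of_nonneg k_nonneg] at hk
  have abs_le_two : |α| ≤ 2 := abs_le.mpr ⟨by linarith [hα.1], hα.2.le⟩
  rw [sCoef_eq_mul]
  exact mul_neg_of_neg_of_pos (centeredDiffCoef_neg hα (by lia))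
    (fourthOrderFactor_pos abs_le_two (mod_cast hk))

theorem stmt_2 (α : ℝ) (hα : α ∈ Set.Ioo (1 : ℝ) 2) (k : ℤ) (hk : 3 ≤ k) :
    sCoef α k < 0 ∧ sCoef α (-k) < 0 := by
  have hα' : α ∈ Set.Ioo 0 2 := Set.Ioo_subset_Ioo_left zero_le_one hα
  exact ⟨stmt_2_general hα' (by grind), stmt_2_general hα' (by grind)⟩
end

section
/- For every α ∈ (1,2), the family (s_k^{(α)})_{k ∈ ℤ} is summable and its sum over all k ∈ ℤ equals 0. -/
/-!
Let `q k = (-1) ^ k / (Γ (a - k + 1) * Γ (b + k + 1))`, which is `(-1) ^ k * C(a + b, a - k)` up to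
the factor `Γ (a + b + 1)`. The functional equation of `Γ` gives `(a + b) * q k = t k - t (k + 1)`
for `t k = (b + k) * q k`. When `a + b > 0`, the sequence `|t k|` is eventually decreasing and the
same identity holds for absolute values, so `q` is summable over `ℕ` and `t` converges; its limit is
`0` because `1 / k` is not summable. Hence the sum over `k ≥ 0` is `b / (a + b) * q 0` and, by the
symmetry exchanging `a` and `b`, the sum over `k ≤ 0` is `a / (a + b) * q 0`. As `k = 0` is counted
twice, the bilateral sum is `0`. Finally, `s_k` is a linear combination of the `q k` for
`a = b = α / 2` and for `a = b = α / 2 + 1`.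
-/

open Filter Topology Asymptotics

lemma summable_of_norm_le_sub_succ {E : Type*} [NormedAddCommGroup E] [CompleteSpace E]
    {f : ℕ → E} {g : ℕ → ℝ} (hg : ∀ n, 0 ≤ g n) (hfg : ∀ᶠ n in atTop, ‖f n‖ ≤ g n - g (n + 1)) :
    Summable f := by
  obtain ⟨N, hN⟩ := eventually_atTop.1 hfg
  rw [← summable_nat_add_iff N]
  refine Summable.of_norm (summable_of_sum_range_le (c := g N) (fun _ ↦ norm_nonneg _) fun n ↦ ?_)
  calc ∑ i ∈ Finset.range n, ‖f (i + N)‖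
      ≤ ∑ i ∈ Finset.range n, (g (i + N) - g (i + 1 + N)) :=
        Finset.sum_le_sum fun i _ ↦ by simpa only [add_right_comm] using hN (i + N) (by omega)
    _ = g N - g (n + N) := by
        simpa only [zero_add] using Finset.sum_range_sub' (fun i ↦ g (i + N)) n
    _ ≤ g N := sub_le_self _ (hg _)

lemma eq_zero_of_summable_norm_of_tendsto_natCast_smul {E : Type*} [NormedAddCommGroup E]
    [NormedSpace ℝ E] {f : ℕ → E} {L : E} (hf : Summable fun n ↦ ‖f n‖)
    (hL : Tendsto (fun n : ℕ ↦ (n : ℝ) • f n) atTop (𝓝 L)) : L = 0 := by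
  by_contra hne
  have one_isBigO : (fun _ : ℕ ↦ (1 : ℝ)) =O[atTop] fun n ↦ (n : ℝ) • f n :=
    (isBigO_const_left_iff_pos_le_norm one_ne_zero).2
      ⟨‖L‖ / 2, by positivity, hL.norm.eventually_const_le (half_lt_self (norm_pos_iff.2 hne))⟩
  have inv_isBigO : (fun n : ℕ ↦ (n : ℝ)⁻¹) =O[atTop] fun n ↦ ‖f n‖ := by
    refine ((isBigO_refl (fun n : ℕ ↦ (n : ℝ)⁻¹) atTop).smul one_isBigO).norm_right.congr' ?_ ?_
    · exact .of_forall fun n ↦ mul_one _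
    · filter_upwards [eventually_ne_atTop 0] with n hn
      rw [inv_smul_smul₀ (Nat.cast_ne_zero.2 hn)]
  exact Real.not_summable_natCast_inv (summable_of_isBigO_nat hf inv_isBigO)

section HypergeometricRecurrence

variable {a b : ℝ} {p : ℕ → ℝ}

lemma summable_of_hypergeometric_recurrence (hab : 0 < a + b)
    (hp : ∀ k : ℕ, (k + 1 + b) * p (k + 1) = (k - a) * p k) : Summable p := by
  refine summable_of_norm_le_sub_succ (g := fun k ↦ |(k + b) * p k| / (a + b))
    (fun k ↦ by positivity) ?_
  filter_upwards [tendsto_natCast_atTop_atTop.eventually_ge_atTop a,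
    tendsto_natCast_atTop_atTop.eventually_ge_atTop (-b)] with k hka hkb
  refine le_of_eq ?_
  push_cast
  rw [hp, abs_mul, abs_mul, abs_of_nonneg (neg_le_iff_add_nonneg.1 hkb),
    abs_of_nonneg (sub_nonneg.2 hka), Real.norm_eq_abs]
  field

lemma sum_range_of_hypergeometric_recurrence (hab : a + b ≠ 0)
    (hp : ∀ k : ℕ, (k + 1 + b) * p (k + 1) = (k - a) * p k) (n : ℕ) :
    ∑ k ∈ Finset.range n, p k = (b * p 0 - (n + b) * p n) / (a + b) := by
  induction n with
  | zero => simp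
  | succ n ih =>
    rw [Finset.sum_range_succ, ih]
    push_cast
    rw [hp]
    field

lemma hasSum_of_hypergeometric_recurrence (hab : 0 < a + b)
    (hp : ∀ k : ℕ, (k + 1 + b) * p (k + 1) = (k - a) * p k) :
    HasSum p (b * p 0 / (a + b)) := by
  have hsum := summable_of_hypergeometric_recurrence hab hp
  have tendsto_mul : Tendsto (fun n : ℕ ↦ (n : ℝ) • p n) atTop
      (𝓝 (b * p 0 - (a + b) * ∑' k, p k - b * 0)) := by
    refine (((hsum.hasSum.tendsto_sum_nat.const_mul (a + b)).const_sub (b * p 0)).sub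
      (hsum.tendsto_atTop_zero.const_mul b)).congr fun n ↦ ?_
    rw [sum_range_of_hypergeometric_recurrence hab.ne' hp, smul_eq_mul]
    field
  have limit_eq_zero := eq_zero_of_summable_norm_of_tendsto_natCast_smul hsum.norm tendsto_mul
  have tsum_eq : ∑' k, p k = b * p 0 / (a + b) := by
    rw [eq_div_iff hab.ne']
    linarith
  exact tsum_eq ▸ hsum.hasSum

end HypergeometricRecurrence

lemma inv_Gamma_eq_self_mul_inv_Gamma_add_one (s : ℝ) :
    (Real.Gamma s)⁻¹ = s * (Real.Gamma (s + 1))⁻¹ := by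
  rcases eq_or_ne s 0 with rfl | hs
  · simp
  · rw [Real.Gamma_add_one hs, mul_inv, mul_inv_cancel_left₀ hs]

/-- The alternating binomial coefficient `(-1) ^ k * C(a + b, a - k)` at real arguments, without its
constant factor `Γ (a + b + 1)`. At a pole of `Γ` Mathlib has `Γ = 0`, so that `Γ⁻¹ = 0` there
is the value of the entire function `1 / Γ`. -/
noncomputable def altBinom (a b : ℝ) (k : ℤ) : ℝ :=
  (-1) ^ k * ((Real.Gamma (a - k + 1))⁻¹ * (Real.Gamma (b + k + 1))⁻¹)

namespace altBinom

lemma apply_neg (a b : ℝ) (k : ℤ) : altBinom a b (-k) = altBinom b a k := by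
  have sign_neg : (-1 : ℝ) ^ (-k) = (-1) ^ k := by rw [zpow_neg, ← inv_zpow, inv_neg_one]
  simp only [altBinom, sign_neg, Int.cast_neg, sub_neg_eq_add, ← sub_eq_add_neg,
    mul_comm (Real.Gamma (a + k + 1))⁻¹]

lemma recurrence (a b : ℝ) (k : ℤ) :
    (k + 1 + b) * altBinom a b (k + 1) = (k - a) * altBinom a b k := by
  have gamma_left := inv_Gamma_eq_self_mul_inv_Gamma_add_one (a - k)
  have gamma_right := inv_Gamma_eq_self_mul_inv_Gamma_add_one (b + k + 1)
  simp only [altBinom, Int.cast_add, Int.cast_one, ← sub_sub, sub_add_cancel, ← add_assoc,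
    gamma_left, gamma_right, zpow_add_one₀ (by norm_num : (-1 : ℝ) ≠ 0)]
  ring

lemma hasSum_nat {a b : ℝ} (hab : 0 < a + b) :
    HasSum (fun k : ℕ ↦ altBinom a b k) (b * altBinom a b 0 / (a + b)) :=
  hasSum_of_hypergeometric_recurrence hab fun k ↦ mod_cast recurrence a b k

lemma hasSum_int {a b : ℝ} (hab : 0 < a + b) : HasSum (altBinom a b) 0 := by
  have nonpos_half : HasSum (fun k : ℕ ↦ altBinom a b (-k)) (a * altBinom a b 0 / (a + b)) := by
    have hba := hasSum_nat (add_comm a b ▸ hab)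
    rw [← apply_neg a b 0, neg_zero, add_comm b a] at hba
    simpa only [apply_neg] using hba
  have halves_cancel : b * altBinom a b 0 / (a + b) + a * altBinom a b 0 / (a + b) -
      altBinom a b 0 = 0 := by
    have hab₀ := hab.ne'
    field
  exact halves_cancel ▸ (hasSum_nat hab).of_nat_of_neg nonpos_half

lemma add_one_add_one {a b : ℝ} {k : ℤ} (ha : a - k + 1 ≠ 0) (hb : b + k + 1 ≠ 0) :
    altBinom (a + 1) (b + 1) k = altBinom a b k / ((a - k + 1) * (b + k + 1)) := by
  rw [altBinom, altBinom, inv_Gamma_eq_self_mul_inv_Gamma_add_one (a - k + 1),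
    inv_Gamma_eq_self_mul_inv_Gamma_add_one (b + k + 1),
    show a + 1 - k + 1 = a - k + 1 + 1 by ring, show b + 1 + k + 1 = b + k + 1 + 1 by ring]
  field_simp

end altBinom

lemma sCoef_eq_altBinom {α : ℝ} (hα : ∀ m : ℤ, α ≠ 2 * m) (k : ℤ) :
    sCoef α k = Real.Gamma (α + 1) * (altBinom (α / 2) (α / 2) k +
      α * (α + 1) * (α + 2) / 24 * altBinom (α / 2 + 1) (α / 2 + 1) k) := by
  have left_ne : α / 2 - k + 1 ≠ 0 := fun h ↦ hα (k - 1) (by push_cast; linarith)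
  have right_ne : α / 2 + k + 1 ≠ 0 := fun h ↦ hα (-k - 1) (by push_cast; linarith)
  rw [altBinom.add_one_add_one left_ne right_ne, sCoef, altBinom,
    show α - 2 * k + 2 = 2 * (α / 2 - k + 1) by ring,
    show α + 2 * k + 2 = 2 * (α / 2 + k + 1) by ring]
  generalize α / 2 - k + 1 = x at *
  generalize α / 2 + k + 1 = y at *
  field

theorem stmt_3_general {α : ℝ} (hpos : 0 < α) (hα : ∀ m : ℤ, α ≠ 2 * m) :
    HasSum (sCoef α) 0 := by
  have hsum := (altBinom.hasSum_int (a := α / 2) (b := α / 2) (by linarith)).add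
    ((altBinom.hasSum_int (a := α / 2 + 1) (b := α / 2 + 1) (by linarith)).mul_left
      (α * (α + 1) * (α + 2) / 24))
  simpa only [← sCoef_eq_altBinom hα, mul_zero, add_zero] using
    hsum.mul_left (Real.Gamma (α + 1))

lemma ne_two_mul_intCast_of_mem_Ioo {α : ℝ} (hα : α ∈ Set.Ioo (0 : ℝ) 2) (m : ℤ) :
    α ≠ 2 * m := by
  rintro rfl
  have m_pos : 0 < m := by exact_mod_cast (by linarith [hα.1] : (0 : ℝ) < m)
  have m_lt : m < 1 := by exact_mod_cast (by linarith [hα.2] : (m : ℝ) < 1)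
  omega

theorem stmt_3 (α : ℝ) (hα : α ∈ Set.Ioo (1 : ℝ) 2) :
    Summable (fun k : ℤ => sCoef α k) ∧ ∑' k : ℤ, sCoef α k = 0 := by
  have hα₀ := Set.Ioo_subset_Ioo_left zero_le_one hα
  have hsum := stmt_3_general hα₀.1 (ne_two_mul_intCast_of_mem_Ioo hα₀)
  exact ⟨hsum.summable, hsum.tsum_eq⟩
end

section
/- For every γ ∈ (1,2) and every k ∈ ℤ, (1/(2π)) · ∫_{−π}^{π} (2 − 2 cos θ)^{γ/2} · cos(kθ) dθ = g_k^{(γ)}. -/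
open Real

/-- The second-order (fractional centered difference) coefficients `g_k^{(γ)}`. -/
noncomputable def gCoef (γ : ℝ) (k : ℤ) : ℝ :=
  (-1 : ℝ) ^ k * Real.Gamma (γ + 1) /
    (Real.Gamma (γ / 2 - k + 1) * Real.Gamma (γ / 2 + k + 1))

/-!
Since `2 - 2 cos 2x = (2 sin x) ^ 2`, periodicity and the substitution `θ = 2x` turn the claim into
`∫ x in 0..π, (2 sin x) ^ γ * cos (2kx) = π * g_k`. Integrating the derivative of
`(2 sin x) ^ (γ + 1) * cos ((2k + 1)x)`, which vanishes at both endpoints, shows that the left side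
satisfies the same two-term recurrence in `k` as the Gamma quotient. For `k = 0` the integral is a
Beta integral, by the substitution `t = (1 - cos x) / 2`, and Legendre's duplication formula gives
its value.
-/

open MeasureTheory Set

section BetaIntegral

variable {a b : ℝ}

lemma ofReal_rpow_mul_one_sub_rpow {x : ℝ} (hx : x ∈ Icc (0 : ℝ) 1) :
    ((x ^ (a - 1) * (1 - x) ^ (b - 1) : ℝ) : ℂ) =
      (x : ℂ) ^ ((a : ℂ) - 1) * (1 - (x : ℂ)) ^ ((b : ℂ) - 1) := by
  rw [Complex.ofReal_mul, Complex.ofReal_cpow hx.1, Complex.ofReal_cpow (sub_nonneg.2 hx.2)]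
  push_cast
  rfl

lemma intervalIntegrable_rpow_mul_one_sub_rpow (ha : 0 < a) (hb : 0 < b) :
    IntervalIntegrable (fun x : ℝ ↦ x ^ (a - 1) * (1 - x) ^ (b - 1)) volume 0 1 := by
  have h := Complex.betaIntegral_convergent (u := a) (v := b) (by simpa) (by simpa)
  rw [intervalIntegrable_iff_integrableOn_Ioc_of_le zero_le_one] at h ⊢
  refine IntegrableOn.congr_fun h.re (fun x hx ↦ ?_) measurableSet_Ioc
  rw [← ofReal_rpow_mul_one_sub_rpow (Ioc_subset_Icc_self hx)]
  exact Complex.ofReal_re _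

lemma integral_rpow_mul_one_sub_rpow (ha : 0 < a) (hb : 0 < b) :
    ∫ x in (0 : ℝ)..1, x ^ (a - 1) * (1 - x) ^ (b - 1) = ProbabilityTheory.beta a b := by
  have h : Complex.betaIntegral a b =
      ((∫ x in (0 : ℝ)..1, x ^ (a - 1) * (1 - x) ^ (b - 1) : ℝ) : ℂ) := by
    rw [← intervalIntegral.integral_ofReal]
    refine intervalIntegral.integral_congr fun x hx ↦ ?_
    exact (ofReal_rpow_mul_one_sub_rpow (uIcc_of_le (zero_le_one' ℝ) ▸ hx)).symm
  rw [ProbabilityTheory.beta_eq_betaIntegralReal a b ha hb, h, Complex.ofReal_re]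

end BetaIntegral

section HalfVersine

variable {E : Type*} [NormedAddCommGroup E] [NormedSpace ℝ E]

lemma image_one_sub_cos_div_two_Ioo :
    (fun x ↦ (1 - cos x) / 2) '' Ioo 0 π = Ioo 0 1 := by
  have hcos : cos '' Ioo 0 π = Ioo (-1) 1 := cosPartialHomeomorph.image_source_eq_target
  calc (fun x ↦ (1 - cos x) / 2) '' Ioo 0 π
      = (2⁻¹ * ·) '' ((1 - ·) '' (cos '' Ioo 0 π)) := by
        simp only [image_image, div_eq_inv_mul]
    _ = Ioo 0 1 := by
        rw [hcos, image_const_sub_Ioo, image_mul_left_Ioo (by norm_num)]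
        norm_num

lemma monotoneOn_one_sub_cos_div_two : MonotoneOn (fun x ↦ (1 - cos x) / 2) (Ioo 0 π) := by
  intro x hx y hy hxy
  have := antitoneOn_cos (Ioo_subset_Icc_self hx) (Ioo_subset_Icc_self hy) hxy
  dsimp only
  linarith

lemma hasDerivAt_one_sub_cos_div_two (x : ℝ) :
    HasDerivAt (fun x ↦ (1 - cos x) / 2) (sin x / 2) x := by
  simpa using ((hasDerivAt_cos x).const_sub 1).div_const 2

lemma intervalIntegrable_sin_div_two_smul_comp_iff (f : ℝ → E) :
    IntervalIntegrable (fun x ↦ (sin x / 2) • f ((1 - cos x) / 2)) volume 0 π ↔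
      IntervalIntegrable f volume 0 1 := by
  rw [intervalIntegrable_iff_integrableOn_Ioo_of_le pi_nonneg,
    intervalIntegrable_iff_integrableOn_Ioo_of_le zero_le_one, ← image_one_sub_cos_div_two_Ioo]
  exact (integrableOn_image_iff_integrableOn_deriv_smul_of_monotoneOn measurableSet_Ioo
    (fun x _ ↦ (hasDerivAt_one_sub_cos_div_two x).hasDerivWithinAt)
    monotoneOn_one_sub_cos_div_two f).symm

lemma integral_sin_div_two_smul_comp (f : ℝ → E) :
    ∫ x in (0)..π, (sin x / 2) • f ((1 - cos x) / 2) = ∫ t in (0)..1, f t := by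
  rw [intervalIntegral.integral_of_le pi_nonneg, intervalIntegral.integral_of_le zero_le_one,
    integral_Ioc_eq_integral_Ioo, integral_Ioc_eq_integral_Ioo, ← image_one_sub_cos_div_two_Ioo]
  exact (integral_image_eq_integral_deriv_smul_of_monotoneOn measurableSet_Ioo
    (fun x _ ↦ (hasDerivAt_one_sub_cos_div_two x).hasDerivWithinAt)
    monotoneOn_one_sub_cos_div_two f).symm

end HalfVersine

section SinPower

variable {γ : ℝ}

lemma two_mul_sin_rpow_eq_beta_integrand {x : ℝ} (hx : x ∈ Ioo 0 π) :
    (2 * sin x) ^ γ = 4 ^ γ * ((sin x / 2) • (((1 - cos x) / 2) ^ ((γ + 1) / 2 - 1) *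
      (1 - (1 - cos x) / 2) ^ ((γ + 1) / 2 - 1))) := by
  have hsin : 0 < sin x := sin_pos_of_mem_Ioo hx
  have hprod : (1 - cos x) / 2 * (1 - (1 - cos x) / 2) = (sin x / 2) ^ (2 : ℝ) := by
    rw [rpow_two]
    linear_combination (-1 / 4) * sin_sq_add_cos_sq x
  calc (2 * sin x) ^ γ
      = 4 ^ γ * (sin x / 2) ^ γ := by
        rw [← mul_rpow (by positivity) (by positivity)]
        congr 1
        ring
    _ = 4 ^ γ * (sin x / 2 * (sin x / 2) ^ (2 * ((γ + 1) / 2 - 1))) := by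
        rw [show 2 * ((γ + 1) / 2 - 1) = γ - 1 by ring, rpow_sub_one (by positivity),
          mul_div_cancel₀ _ (by positivity)]
    _ = _ := by
        rw [rpow_mul (by positivity), ← hprod, mul_rpow (by linarith [cos_le_one x])
          (by linarith [neg_one_le_cos x]), smul_eq_mul]

lemma intervalIntegrable_two_mul_sin_rpow (hγ : -1 < γ) :
    IntervalIntegrable (fun x ↦ (2 * sin x) ^ γ) volume 0 π := by
  have ha : 0 < (γ + 1) / 2 := by linarith
  have h := ((intervalIntegrable_sin_div_two_smul_comp_iff _).2
    (intervalIntegrable_rpow_mul_one_sub_rpow ha ha)).const_mul (4 ^ γ)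
  rw [intervalIntegrable_iff_integrableOn_Ioo_of_le pi_nonneg] at h ⊢
  exact h.congr_fun (fun x hx ↦ (two_mul_sin_rpow_eq_beta_integrand hx).symm) measurableSet_Ioo

lemma integral_two_mul_sin_rpow_eq_beta (hγ : -1 < γ) :
    ∫ x in (0)..π, (2 * sin x) ^ γ =
      4 ^ γ * ProbabilityTheory.beta ((γ + 1) / 2) ((γ + 1) / 2) := by
  have ha : 0 < (γ + 1) / 2 := by linarith
  rw [← integral_rpow_mul_one_sub_rpow ha ha, ← integral_sin_div_two_smul_comp,
    ← intervalIntegral.integral_const_mul]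
  simp only [intervalIntegral.integral_of_le pi_nonneg, integral_Ioc_eq_integral_Ioo]
  exact setIntegral_congr_fun measurableSet_Ioo fun x hx ↦ two_mul_sin_rpow_eq_beta_integrand hx

lemma two_rpow_mul_Gamma_mul_Gamma (γ : ℝ) :
    2 ^ γ * (Gamma ((γ + 1) / 2) * Gamma (γ / 2 + 1)) = Gamma (γ + 1) * √π := by
  have h := Gamma_mul_Gamma_add_half ((γ + 1) / 2)
  rw [show (γ + 1) / 2 + 1 / 2 = γ / 2 + 1 by ring, mul_div_cancel₀ _ two_ne_zero,
    show 1 - (γ + 1) = -γ by ring, rpow_neg two_pos.le] at h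
  rw [h]
  field_simp

lemma integral_two_mul_sin_rpow (hγ : -1 < γ) :
    ∫ x in (0)..π, (2 * sin x) ^ γ = π * (Gamma (γ + 1) / Gamma (γ / 2 + 1) ^ 2) := by
  have hΓ : Gamma (γ + 1) ≠ 0 := (Gamma_pos_of_pos (by linarith)).ne'
  have hΓ' : Gamma (γ / 2 + 1) ≠ 0 := (Gamma_pos_of_pos (by linarith)).ne'
  have hfour : (4 : ℝ) ^ γ = 2 ^ γ * 2 ^ γ := by
    rw [← mul_rpow two_pos.le two_pos.le]
    norm_num
  rw [integral_two_mul_sin_rpow_eq_beta hγ, ProbabilityTheory.beta, add_halves, mul_div_assoc',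
    mul_div_assoc', div_eq_div_iff hΓ (pow_ne_zero 2 hΓ'), hfour]
  calc 2 ^ γ * 2 ^ γ * (Gamma ((γ + 1) / 2) * Gamma ((γ + 1) / 2)) * Gamma (γ / 2 + 1) ^ 2
      = (2 ^ γ * (Gamma ((γ + 1) / 2) * Gamma (γ / 2 + 1))) ^ 2 := by ring
    _ = π * Gamma (γ + 1) * Gamma (γ + 1) := by
        rw [two_rpow_mul_Gamma_mul_Gamma, mul_pow, sq_sqrt pi_nonneg]
        ring

lemma hasDerivAt_two_mul_sin_rpow_mul_cos (γ a : ℝ) {x : ℝ} (hx : x ∈ Ioo 0 π) :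
    HasDerivAt (fun x ↦ (2 * sin x) ^ (γ + 1) * cos ((a + 1) * x))
      ((γ + a + 2) * ((2 * sin x) ^ γ * cos ((a + 2) * x)) +
        (γ - a) * ((2 * sin x) ^ γ * cos (a * x))) x := by
  have hsin : 2 * sin x ≠ 0 := (mul_pos two_pos (sin_pos_of_mem_Ioo hx)).ne'
  have hpow := ((hasDerivAt_sin x).const_mul 2).rpow_const (p := γ + 1) (Or.inl hsin)
  have hcos := ((hasDerivAt_id x).const_mul (a + 1)).cos
  refine (hpow.mul hcos).congr_deriv ?_
  have hadd : cos ((a + 2) * x) = cos ((a + 1) * x) * cos x - sin ((a + 1) * x) * sin x := by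
    rw [← cos_add]; congr 1; ring
  have hsub : cos (a * x) = cos ((a + 1) * x) * cos x + sin ((a + 1) * x) * sin x := by
    rw [← cos_sub]; congr 1; ring
  rw [hadd, hsub, add_sub_cancel_right, rpow_add_one hsin]
  simp only [id, mul_one]
  ring

lemma integral_two_mul_sin_rpow_mul_cos_recurrence (hγ : -1 < γ) (a : ℝ) :
    (γ + a + 2) * (∫ x in (0)..π, (2 * sin x) ^ γ * cos ((a + 2) * x)) +
      (γ - a) * (∫ x in (0)..π, (2 * sin x) ^ γ * cos (a * x)) = 0 := by
  have hf (c d : ℝ) :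
      IntervalIntegrable (fun x ↦ d * ((2 * sin x) ^ γ * cos (c * x))) volume 0 π :=
    ((intervalIntegrable_two_mul_sin_rpow hγ).mul_continuousOn (by fun_prop)).const_mul d
  have hcont : Continuous fun x ↦ (2 * sin x) ^ (γ + 1) * cos ((a + 1) * x) :=
    ((by fun_prop : Continuous fun x ↦ 2 * sin x).rpow_const
      fun _ ↦ Or.inr (by linarith)).mul (by fun_prop)
  have hftc := intervalIntegral.integral_eq_sub_of_hasDerivAt_of_le pi_nonneg hcont.continuousOn
    (fun _ hx ↦ hasDerivAt_two_mul_sin_rpow_mul_cos γ a hx) ((hf _ _).add (hf _ _))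
  rw [intervalIntegral.integral_add (hf _ _) (hf _ _), intervalIntegral.integral_const_mul,
    intervalIntegral.integral_const_mul] at hftc
  rw [hftc, sin_pi, sin_zero, mul_zero, zero_rpow (by linarith), zero_mul, zero_mul, sub_zero]

end SinPower

section Coefficients

lemma gCoef_neg (γ : ℝ) (k : ℤ) : gCoef γ (-k) = gCoef γ k := by
  have hsign : (-1 : ℝ) ^ (-k) = (-1) ^ k := by rw [zpow_neg, ← inv_zpow, inv_neg_one]
  unfold gCoef
  rw [hsign, Int.cast_neg, sub_neg_eq_add, ← sub_eq_add_neg, mul_comm (Gamma (γ / 2 + k + 1))]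

lemma gCoef_zero (γ : ℝ) : gCoef γ 0 = Gamma (γ + 1) / Gamma (γ / 2 + 1) ^ 2 := by
  simp [gCoef, sq]

lemma gCoef_recurrence {γ : ℝ} {k : ℤ} (hsub : γ / 2 - k ≠ 0) (hadd : γ / 2 + k + 1 ≠ 0) :
    (γ + 2 * k + 2) * gCoef γ (k + 1) + (γ - 2 * k) * gCoef γ k = 0 := by
  unfold gCoef
  push_cast
  rw [show γ / 2 - ((k : ℝ) + 1) + 1 = γ / 2 - k by ring, ← add_assoc (γ / 2) (k : ℝ) 1,
    Gamma_add_one hsub, Gamma_add_one hadd, zpow_add_one₀ (by norm_num),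
    show γ - 2 * (k : ℝ) = 2 * (γ / 2 - k) by ring,
    show γ + 2 * (k : ℝ) + 2 = 2 * (γ / 2 + k + 1) by ring]
  generalize γ / 2 - (k : ℝ) = u at hsub
  generalize γ / 2 + (k : ℝ) + 1 = v at hadd
  field_simp
  ring

end Coefficients

lemma integral_two_mul_sin_rpow_mul_cos_natCast {γ : ℝ} (hγ : -1 < γ) (n : ℕ)
    (hn : ∀ m : ℕ, γ / 2 - n + 1 ≠ -m) :
    ∫ x in (0)..π, (2 * sin x) ^ γ * cos (2 * n * x) = π * gCoef γ n := by
  induction n with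
  | zero => simpa [gCoef_zero] using integral_two_mul_sin_rpow hγ
  | succ n ih =>
    have hprev : ∀ m : ℕ, γ / 2 - n + 1 ≠ -m := fun m h ↦ hn (m + 1) (by push_cast; linarith)
    have hsub : γ / 2 - n ≠ 0 := fun h ↦ hn 0 (by push_cast; linarith)
    have hadd : γ / 2 + n + 1 ≠ 0 := by linarith [n.cast_nonneg (α := ℝ)]
    have hintegral := integral_two_mul_sin_rpow_mul_cos_recurrence hγ (2 * n)
    have hcoef := gCoef_recurrence (k := n) (by exact_mod_cast hsub) (by exact_mod_cast hadd)
    rw [ih hprev] at hintegral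
    rw [Int.cast_natCast] at hcoef
    have hne : γ + 2 * n + 2 ≠ 0 := fun h ↦ hadd (by linarith)
    refine mul_left_cancel₀ hne ?_
    rw [Nat.cast_succ, Nat.cast_succ, mul_add, mul_one]
    linear_combination hintegral - π * hcoef

lemma integral_two_sub_two_mul_cos_rpow_mul_cos (γ : ℝ) (k : ℤ) :
    ∫ θ in (-π)..π, (2 - 2 * cos θ) ^ (γ / 2) * cos (k * θ) =
      2 * ∫ x in (0)..π, (2 * sin x) ^ γ * cos (2 * k * x) := by
  set f : ℝ → ℝ := fun θ ↦ (2 - 2 * cos θ) ^ (γ / 2) * cos (k * θ)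
  have hper : f.Periodic (2 * π) := fun θ ↦ by
    simp only [f, cos_add_two_pi, mul_add, cos_add_int_mul_two_pi]
  calc ∫ θ in (-π)..π, f θ
      = ∫ θ in (2 * 0)..(2 * π), f θ := by
        simpa [two_mul] using hper.intervalIntegral_add_eq (-π) 0
    _ = 2 * ∫ x in (0)..π, f (2 * x) :=
        (intervalIntegral.smul_integral_comp_mul_left f 2).symm
    _ = 2 * ∫ x in (0)..π, (2 * sin x) ^ γ * cos (2 * k * x) := by
        congr 1
        refine intervalIntegral.integral_congr fun x hx ↦ ?_
        rw [uIcc_of_le pi_nonneg] at hx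
        have hbase : 2 - 2 * cos (2 * x) = (2 * sin x) ^ (2 : ℝ) := by
          rw [rpow_two, cos_two_mul]
          linear_combination -4 * sin_sq_add_cos_sq x
        have hsin : 0 ≤ 2 * sin x := mul_nonneg two_pos.le (sin_nonneg_of_mem_Icc hx)
        simp only [f]
        rw [hbase, ← rpow_mul hsin, mul_div_cancel₀ _ two_ne_zero]
        ring_nf

lemma intCast_notMem_Ioo_zero_one (j : ℤ) : (j : ℝ) ∉ Ioo (0 : ℝ) 1 := by
  rintro ⟨hpos, hlt⟩
  norm_cast at hpos hlt
  omega

theorem stmt_4_general {γ : ℝ} (hγ : -1 < γ) (k : ℤ)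
    (hk : ∀ m : ℕ, γ / 2 - |(k : ℝ)| + 1 ≠ -m) :
    (1 / (2 * π)) * ∫ θ in (-π)..π, (2 - 2 * cos θ) ^ (γ / 2) * cos (k * θ) = gCoef γ k := by
  have hnat (n : ℕ) (hn : |(k : ℝ)| = n) :
      ∫ x in (0)..π, (2 * sin x) ^ γ * cos (2 * n * x) = π * gCoef γ n :=
    integral_two_mul_sin_rpow_mul_cos_natCast hγ n (hn ▸ hk)
  have hsin : ∫ x in (0)..π, (2 * sin x) ^ γ * cos (2 * k * x) = π * gCoef γ k := by
    obtain ⟨n, rfl | rfl⟩ := k.eq_nat_or_neg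
    · simpa using hnat n (by simp)
    · simpa [gCoef_neg] using hnat n (by simp)
  rw [integral_two_sub_two_mul_cos_rpow_mul_cos, hsin]
  field_simp

theorem stmt_4 (γ : ℝ) (hγ : γ ∈ Set.Ioo (1 : ℝ) 2) (k : ℤ) :
    (1 / (2 * π)) *
        ∫ θ in (-π)..π, (2 - 2 * Real.cos θ) ^ (γ / 2) * Real.cos ((k : ℝ) * θ)
      = gCoef γ k := by
  exact stmt_4_general (by linarith [hγ.1]) k fun m hm ↦ intCast_notMem_Ioo_zero_one (|k| - 1 - m)
    ⟨by push_cast; linarith [hγ.1], by push_cast; linarith [hγ.2]⟩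
end

section
/- Let f₁, f₂ : [−π,π] → ℝ be Lebesgue-integrable even functions with f₁ > 0 almost everywhere, and suppose the essential infimum l̃ and essential supremum L̃ of f₂/f₁ over [−π,π] are finite. For n ≥ 1, let T₁ and T₂ be the n×n real symmetric Toeplitz matrices with (j,k) entries (T_l)_{jk} = (1/(2π)) ∫_{−π}^{π} f_l(θ) cos((j−k)θ) dθ, l = 1,2. Then T₁ is positive definite, and for every nonzero y ∈ ℝ^n one has l̃·(yᵀT₁y) ≤ yᵀT₂y ≤ L̃·(yᵀT₁y); moreover, if l̃ < L̃ these inequalities are strict. Consequently every eigenvalue of T₁^{−1}T₂ lies in [l̃, L̃], and in the open interval (l̃, L̃) when l̃ < L̃. -/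
open MeasureTheory Real Matrix

/-!
Write `T f` for the Toeplitz matrix of the symbol `f`. With `p(z) = ∑ j, y j * z ^ j`, its quadratic
form at `y` is the mean of `f θ * |p(e^{iθ})|²` over `[-π, π]`. A nonzero polynomial has finitely
many zeros, so this weight is positive almost everywhere, and `f ↦ yᵀ (T f) y` is linear and
strictly monotone modulo null sets. The bounds follow by comparing
`essInf (f₂ / f₁) * f₁ ≤ f₂ ≤ essSup (f₂ / f₁) * f₁`: equality almost everywhere in either
place makes `f₂ / f₁` constant, hence its two essential bounds equal.
-/

section EssentialBounds

variable {α : Type*} {m : MeasurableSpace α} {μ : Measure α}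

lemma not_ae_eq_const_of_essInf_lt_essSup [NeZero μ] {β : Type*} [ConditionallyCompleteLattice β]
    {f : α → β} (h : essInf f μ < essSup f μ) (c : β) : ¬ f =ᵐ[μ] fun _ => c := by
  intro hc
  rw [essInf_congr_ae hc, essSup_congr_ae hc, essInf_const c (NeZero.ne μ),
    essSup_const c (NeZero.ne μ)] at h
  exact h.false

variable {f g w : α → ℝ}

lemma essInf_div_mul_ae_le (hf : ∀ᵐ x ∂μ, 0 < f x)
    (hbdd : (ae μ).IsBoundedUnder (· ≥ ·) fun x => g x / f x) :
    (fun x => essInf (fun x => g x / f x) μ * f x) ≤ᵐ[μ] g := by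
  filter_upwards [hf, ae_essInf_le hbdd] with x hx hle
  exact (le_div_iff₀ hx).1 hle

lemma ae_le_essSup_div_mul (hf : ∀ᵐ x ∂μ, 0 < f x)
    (hbdd : (ae μ).IsBoundedUnder (· ≤ ·) fun x => g x / f x) :
    g ≤ᵐ[μ] fun x => essSup (fun x => g x / f x) μ * f x := by
  filter_upwards [hf, ae_le_essSup hbdd] with x hx hle
  exact (div_le_iff₀ hx).1 hle

lemma not_ae_eq_const_mul_of_essInf_div_lt_essSup_div [NeZero μ] (hf : ∀ᵐ x ∂μ, 0 < f x)
    (h : essInf (fun x => g x / f x) μ < essSup (fun x => g x / f x) μ) (c : ℝ) :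
    ¬ g =ᵐ[μ] fun x => c * f x := by
  refine fun hg => not_ae_eq_const_of_essInf_lt_essSup h c ?_
  filter_upwards [hf, hg] with x hx hgx
  exact (div_eq_iff hx.ne').2 hgx

lemma integral_mul_lt_integral_mul_of_ae (hw : ∀ᵐ x ∂μ, 0 < w x)
    (hf : Integrable (fun x => f x * w x) μ) (hg : Integrable (fun x => g x * w x) μ)
    (hle : f ≤ᵐ[μ] g) (hne : ¬ f =ᵐ[μ] g) : ∫ x, f x * w x ∂μ < ∫ x, g x * w x ∂μ := by
  have hle' : (fun x => f x * w x) ≤ᵐ[μ] fun x => g x * w x := by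
    filter_upwards [hle, hw] with x hx hwx
    gcongr
  refine (integral_mono_ae hf hg hle').lt_of_ne fun heq => hne ?_
  filter_upwards [(integral_eq_iff_of_ae_le hf hg hle').1 heq, hw] with x hx hwx
  exact mul_right_cancel₀ hwx.ne' hx

end EssentialBounds

lemma dotProduct_mulVec_eq_mul_of_inv_mul_mulVec_eq_smul {ι R : Type*} [Fintype ι] [DecidableEq ι]
    [CommRing R] {A B : Matrix ι ι R} (hA : IsUnit A) {μ : R} {v : ι → R}
    (h : (A⁻¹ * B) *ᵥ v = μ • v) : v ⬝ᵥ B *ᵥ v = μ * (v ⬝ᵥ A *ᵥ v) := by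
  have hBv : B *ᵥ v = μ • (A *ᵥ v) := by
    rw [← mulVec_smul, ← h, mulVec_mulVec,
      mul_nonsing_inv_cancel_left _ _ ((isUnit_iff_isUnit_det A).1 hA)]
  rw [hBv, dotProduct_smul, smul_eq_mul]

lemma ae_eval_circleMap_ne_zero {p : Polynomial ℂ} (hp : p ≠ 0) (c : ℂ) {R : ℝ}
    (hR : R ≠ 0) (μ : Measure ℝ) [NullSingletonClass μ] :
    ∀ᵐ θ ∂μ, p.eval (circleMap c R θ) ≠ 0 :=
  ((Polynomial.finite_setOfPred_isRoot hp).countable.preimage_circleMap c hR).ae_notMem μ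

section Toeplitz

variable {n : ℕ}

instance neZero_volume_restrict_Icc_neg_pi_pi : NeZero (volume.restrict (Set.Icc (-π) π)) :=
  ⟨by simp [Measure.restrict_eq_zero, pi_pos]⟩

/-- The energy spectrum `|∑ j, y j * e^{ijθ}|²` of a real vector `y`, the weight against which a
symbol is integrated in the quadratic form of its Toeplitz matrix. The sum is encoded as a
polynomial evaluated on the unit circle. -/
noncomputable def energySpectrum (y : Fin n → ℝ) (θ : ℝ) : ℝ :=
  Complex.normSq ((Polynomial.ofFn n fun j => (y j : ℂ)).eval (circleMap 0 1 θ))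

lemma energySpectrum_nonneg (y : Fin n → ℝ) (θ : ℝ) : 0 ≤ energySpectrum y θ :=
  Complex.normSq_nonneg _

lemma continuous_energySpectrum (y : Fin n → ℝ) : Continuous (energySpectrum y) :=
  Complex.continuous_normSq.comp ((Polynomial.continuous _).comp (continuous_circleMap 0 1))

lemma ae_energySpectrum_pos {y : Fin n → ℝ} (hy : y ≠ 0) (μ : Measure ℝ) [NullSingletonClass μ] :
    ∀ᵐ θ ∂μ, 0 < energySpectrum y θ := by
  have hp : Polynomial.ofFn n (fun j => (y j : ℂ)) ≠ 0 := by
    rw [Ne, map_eq_zero_iff _ (Polynomial.injective_ofFn n)]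
    exact fun h => hy (funext fun j => Complex.ofReal_eq_zero.1 (congrFun h j))
  filter_upwards [ae_eval_circleMap_ne_zero hp 0 one_ne_zero μ] with θ hθ
  exact Complex.normSq_pos.2 hθ

lemma energySpectrum_eq_sum_cos (y : Fin n → ℝ) (θ : ℝ) :
    energySpectrum y θ = ∑ j, ∑ k, y j * y k * cos (((j : ℤ) - (k : ℤ) : ℝ) * θ) := by
  have heval : (Polynomial.ofFn n fun j => (y j : ℂ)).eval (circleMap 0 1 θ) =
      ∑ j, y j * Complex.exp ((j * θ : ℝ) * Complex.I) := by
    simp [Polynomial.ofFn_eq_sum_monomial, Polynomial.eval_finsetSum, circleMap_zero,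
      ← Complex.exp_nat_mul, mul_assoc]
  rw [energySpectrum, heval, Complex.normSq_apply]
  simp only [Complex.re_sum, Complex.im_sum, Complex.re_ofReal_mul, Complex.im_ofReal_mul,
    Complex.exp_ofReal_mul_I_re, Complex.exp_ofReal_mul_I_im, Finset.sum_mul_sum,
    ← Finset.sum_add_distrib, Int.cast_natCast, sub_mul, cos_sub]
  refine Finset.sum_congr rfl fun j _ => Finset.sum_congr rfl fun k _ => ?_
  ring

lemma integrableOn_mul_energySpectrum {f : ℝ → ℝ} {s : Set ℝ} (hs : IsCompact s)
    (hf : IntegrableOn f s) (y : Fin n → ℝ) :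
    IntegrableOn (fun θ => f θ * energySpectrum y θ) s :=
  hf.mul_continuousOn (continuous_energySpectrum y).continuousOn hs

/-- The `n × n` Toeplitz matrix whose entries are the cosine coefficients of the symbol `f`,
that is, its Fourier coefficients when `f` is even. -/
noncomputable def cosToeplitz (f : ℝ → ℝ) (n : ℕ) : Matrix (Fin n) (Fin n) ℝ :=
  .of fun j k => (1 / (2 * π)) * ∫ θ in (-π)..π, f θ * cos (((j : ℤ) - (k : ℤ) : ℝ) * θ)

lemma cosToeplitz_const_mul (c : ℝ) (f : ℝ → ℝ) :
    cosToeplitz (fun θ => c * f θ) n = c • cosToeplitz f n := by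
  ext
  simp [cosToeplitz, mul_assoc, mul_left_comm]

lemma isHermitian_cosToeplitz (f : ℝ → ℝ) : (cosToeplitz f n).IsHermitian := by
  ext j k
  simp only [cosToeplitz, conjTranspose_apply, of_apply, star_trivial]
  congr! 4 with θ
  rw [← cos_neg, ← neg_mul, neg_sub]

lemma dotProduct_cosToeplitz_mulVec {f : ℝ → ℝ} (hf : IntegrableOn f (Set.Icc (-π) π))
    (y : Fin n → ℝ) : y ⬝ᵥ cosToeplitz f n *ᵥ y =
      (1 / (2 * π)) * ∫ θ in Set.Icc (-π) π, f θ * energySpectrum y θ := by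
  have hint (j k : Fin n) : IntegrableOn
      (fun θ => f θ * (y j * y k * cos (((j : ℤ) - (k : ℤ) : ℝ) * θ))) (Set.Icc (-π) π) :=
    hf.mul_continuousOn (by fun_prop) isCompact_Icc
  simp only [energySpectrum_eq_sum_cos, Finset.mul_sum, dotProduct, mulVec]
  rw [integral_finsetSum _ fun j _ => integrable_finsetSum _ fun k _ => hint j k, Finset.mul_sum]
  refine Finset.sum_congr rfl fun j _ => ?_
  rw [integral_finsetSum _ fun k _ => hint j k, Finset.mul_sum]
  refine Finset.sum_congr rfl fun k _ => ?_
  simp only [cosToeplitz, of_apply, mul_left_comm (f _), integral_const_mul,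
    intervalIntegral.integral_of_le (neg_le_self pi_nonneg), integral_Icc_eq_integral_Ioc]
  ring

lemma dotProduct_cosToeplitz_mulVec_le {f g : ℝ → ℝ} (hf : IntegrableOn f (Set.Icc (-π) π))
    (hg : IntegrableOn g (Set.Icc (-π) π)) (hle : f ≤ᵐ[volume.restrict (Set.Icc (-π) π)] g)
    (y : Fin n → ℝ) : y ⬝ᵥ cosToeplitz f n *ᵥ y ≤ y ⬝ᵥ cosToeplitz g n *ᵥ y := by
  rw [dotProduct_cosToeplitz_mulVec hf, dotProduct_cosToeplitz_mulVec hg]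
  refine mul_le_mul_of_nonneg_left (integral_mono_ae
    (integrableOn_mul_energySpectrum isCompact_Icc hf y)
    (integrableOn_mul_energySpectrum isCompact_Icc hg y) ?_) (by positivity)
  filter_upwards [hle] with θ hθ
  exact mul_le_mul_of_nonneg_right hθ (energySpectrum_nonneg y θ)

lemma dotProduct_cosToeplitz_mulVec_lt {f g : ℝ → ℝ}
    (hf : IntegrableOn f (Set.Icc (-π) π)) (hg : IntegrableOn g (Set.Icc (-π) π))
    (hle : f ≤ᵐ[volume.restrict (Set.Icc (-π) π)] g)
    (hne : ¬ f =ᵐ[volume.restrict (Set.Icc (-π) π)] g) {y : Fin n → ℝ} (hy : y ≠ 0) :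
    y ⬝ᵥ cosToeplitz f n *ᵥ y < y ⬝ᵥ cosToeplitz g n *ᵥ y := by
  rw [dotProduct_cosToeplitz_mulVec hf, dotProduct_cosToeplitz_mulVec hg]
  exact mul_lt_mul_of_pos_left (integral_mul_lt_integral_mul_of_ae (ae_energySpectrum_pos hy _)
    (integrableOn_mul_energySpectrum isCompact_Icc hf y)
    (integrableOn_mul_energySpectrum isCompact_Icc hg y) hle hne) (by positivity)

lemma dotProduct_cosToeplitz_const_mul_mulVec (c : ℝ) (f : ℝ → ℝ) (y : Fin n → ℝ) :
    y ⬝ᵥ cosToeplitz (fun θ => c * f θ) n *ᵥ y = c * (y ⬝ᵥ cosToeplitz f n *ᵥ y) := by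
  rw [cosToeplitz_const_mul, smul_mulVec, dotProduct_smul, smul_eq_mul]

lemma posDef_cosToeplitz {f : ℝ → ℝ} (hf : IntegrableOn f (Set.Icc (-π) π))
    (hnonneg : 0 ≤ᵐ[volume.restrict (Set.Icc (-π) π)] f)
    (hne : ¬ 0 =ᵐ[volume.restrict (Set.Icc (-π) π)] f) : (cosToeplitz f n).PosDef := by
  refine .of_dotProduct_mulVec_pos (isHermitian_cosToeplitz f) fun y hy => ?_
  simpa [dotProduct_cosToeplitz_mulVec integrableOn_zero] using
    dotProduct_cosToeplitz_mulVec_lt integrableOn_zero hf hnonneg hne hy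

lemma dotProduct_cosToeplitz_mulVec_mem_Icc {f g : ℝ → ℝ} (hf : IntegrableOn f (Set.Icc (-π) π))
    (hg : IntegrableOn g (Set.Icc (-π) π))
    (hpos : ∀ᵐ θ ∂(volume.restrict (Set.Icc (-π) π)), 0 < f θ)
    (hbddBelow : (ae (volume.restrict (Set.Icc (-π) π))).IsBoundedUnder (· ≥ ·)
      fun θ => g θ / f θ)
    (hbddAbove : (ae (volume.restrict (Set.Icc (-π) π))).IsBoundedUnder (· ≤ ·)
      fun θ => g θ / f θ) (y : Fin n → ℝ) :
    y ⬝ᵥ cosToeplitz g n *ᵥ y ∈ Set.Icc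
      (essInf (fun θ => g θ / f θ) (volume.restrict (Set.Icc (-π) π)) *
        (y ⬝ᵥ cosToeplitz f n *ᵥ y))
      (essSup (fun θ => g θ / f θ) (volume.restrict (Set.Icc (-π) π)) *
        (y ⬝ᵥ cosToeplitz f n *ᵥ y)) := by
  simp only [← dotProduct_cosToeplitz_const_mul_mulVec]
  exact ⟨dotProduct_cosToeplitz_mulVec_le (hf.const_mul _) hg
      (essInf_div_mul_ae_le hpos hbddBelow) y,
    dotProduct_cosToeplitz_mulVec_le hg (hf.const_mul _) (ae_le_essSup_div_mul hpos hbddAbove) y⟩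

lemma dotProduct_cosToeplitz_mulVec_mem_Ioo {f g : ℝ → ℝ} (hf : IntegrableOn f (Set.Icc (-π) π))
    (hg : IntegrableOn g (Set.Icc (-π) π))
    (hpos : ∀ᵐ θ ∂(volume.restrict (Set.Icc (-π) π)), 0 < f θ)
    (hbddBelow : (ae (volume.restrict (Set.Icc (-π) π))).IsBoundedUnder (· ≥ ·)
      fun θ => g θ / f θ)
    (hbddAbove : (ae (volume.restrict (Set.Icc (-π) π))).IsBoundedUnder (· ≤ ·)
      fun θ => g θ / f θ)
    (hlt : essInf (fun θ => g θ / f θ) (volume.restrict (Set.Icc (-π) π)) <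
      essSup (fun θ => g θ / f θ) (volume.restrict (Set.Icc (-π) π)))
    {y : Fin n → ℝ} (hy : y ≠ 0) :
    y ⬝ᵥ cosToeplitz g n *ᵥ y ∈ Set.Ioo
      (essInf (fun θ => g θ / f θ) (volume.restrict (Set.Icc (-π) π)) *
        (y ⬝ᵥ cosToeplitz f n *ᵥ y))
      (essSup (fun θ => g θ / f θ) (volume.restrict (Set.Icc (-π) π)) *
        (y ⬝ᵥ cosToeplitz f n *ᵥ y)) := by
  have hne := not_ae_eq_const_mul_of_essInf_div_lt_essSup_div hpos hlt
  simp only [← dotProduct_cosToeplitz_const_mul_mulVec]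
  exact ⟨dotProduct_cosToeplitz_mulVec_lt (hf.const_mul _) hg
      (essInf_div_mul_ae_le hpos hbddBelow) (fun h => hne _ h.symm) hy,
    dotProduct_cosToeplitz_mulVec_lt hg (hf.const_mul _)
      (ae_le_essSup_div_mul hpos hbddAbove) (hne _) hy⟩

theorem stmt_13_general (f₁ f₂ : ℝ → ℝ)
    (hint₁ : IntegrableOn f₁ (Set.Icc (-π) π))
    (hint₂ : IntegrableOn f₂ (Set.Icc (-π) π))
    (hpos : ∀ᵐ θ ∂(volume.restrict (Set.Icc (-π) π)), 0 < f₁ θ)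
    (l L : ℝ)
    (hbddBelow : Filter.IsBoundedUnder (· ≥ ·)
      (ae (volume.restrict (Set.Icc (-π) π))) (fun θ => f₂ θ / f₁ θ))
    (hbddAbove : Filter.IsBoundedUnder (· ≤ ·)
      (ae (volume.restrict (Set.Icc (-π) π))) (fun θ => f₂ θ / f₁ θ))
    (hl : l = essInf (fun θ => f₂ θ / f₁ θ) (volume.restrict (Set.Icc (-π) π)))
    (hL : L = essSup (fun θ => f₂ θ / f₁ θ) (volume.restrict (Set.Icc (-π) π)))
    (T₁ T₂ : Matrix (Fin n) (Fin n) ℝ)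
    (hT₁ : T₁ = cosToeplitz f₁ n) (hT₂ : T₂ = cosToeplitz f₂ n) :
    T₁.PosDef ∧
    (∀ y : Fin n → ℝ, y ≠ 0 →
      l * (y ⬝ᵥ T₁ *ᵥ y) ≤ y ⬝ᵥ T₂ *ᵥ y ∧ y ⬝ᵥ T₂ *ᵥ y ≤ L * (y ⬝ᵥ T₁ *ᵥ y)) ∧
    (l < L → ∀ y : Fin n → ℝ, y ≠ 0 →
      l * (y ⬝ᵥ T₁ *ᵥ y) < y ⬝ᵥ T₂ *ᵥ y ∧ y ⬝ᵥ T₂ *ᵥ y < L * (y ⬝ᵥ T₁ *ᵥ y)) ∧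
    (∀ (μ : ℝ) (v : Fin n → ℝ), v ≠ 0 → (T₁⁻¹ * T₂) *ᵥ v = μ • v →
      (l ≤ μ ∧ μ ≤ L) ∧ (l < L → l < μ ∧ μ < L)) := by
  subst hl hL hT₁ hT₂
  have hT₁ : (cosToeplitz f₁ n).PosDef := by
    refine posDef_cosToeplitz hint₁ (hpos.mono fun _ => le_of_lt) fun h => ?_
    obtain ⟨θ, hzero, hθ⟩ := (h.and hpos).exists
    exact hθ.ne hzero
  have weak (y : Fin n → ℝ) :=
    dotProduct_cosToeplitz_mulVec_mem_Icc hint₁ hint₂ hpos hbddBelow hbddAbove y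
  have strict (hlt) (y : Fin n → ℝ) (hy : y ≠ 0) :=
    dotProduct_cosToeplitz_mulVec_mem_Ioo hint₁ hint₂ hpos hbddBelow hbddAbove hlt hy
  refine ⟨hT₁, fun y _ => weak y, strict, fun μ v hv hμ => ?_⟩
  have hvpos : 0 < v ⬝ᵥ cosToeplitz f₁ n *ᵥ v := hT₁.dotProduct_mulVec_pos hv
  have hquot := dotProduct_mulVec_eq_mul_of_inv_mul_mulVec_eq_smul hT₁.isUnit hμ
  simpa only [hquot, Set.mem_Icc, Set.mem_Ioo, mul_le_mul_iff_left₀ hvpos,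
    mul_lt_mul_iff_left₀ hvpos] using And.intro (weak v) fun hlt => strict hlt v hv

end Toeplitz

theorem stmt_13 (f₁ f₂ : ℝ → ℝ)
    (hint₁ : IntegrableOn f₁ (Set.Icc (-π) π))
    (hint₂ : IntegrableOn f₂ (Set.Icc (-π) π))
    (heven₁ : ∀ θ, f₁ (-θ) = f₁ θ) (heven₂ : ∀ θ, f₂ (-θ) = f₂ θ)
    (hpos : ∀ᵐ θ ∂(volume.restrict (Set.Icc (-π) π)), 0 < f₁ θ)
    (l L : ℝ)
    (hbddBelow : Filter.IsBoundedUnder (· ≥ ·)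
      (ae (volume.restrict (Set.Icc (-π) π))) (fun θ => f₂ θ / f₁ θ))
    (hbddAbove : Filter.IsBoundedUnder (· ≤ ·)
      (ae (volume.restrict (Set.Icc (-π) π))) (fun θ => f₂ θ / f₁ θ))
    (hl : l = essInf (fun θ => f₂ θ / f₁ θ) (volume.restrict (Set.Icc (-π) π)))
    (hL : L = essSup (fun θ => f₂ θ / f₁ θ) (volume.restrict (Set.Icc (-π) π)))
    (n : ℕ) (hn : 1 ≤ n)
    (T₁ T₂ : Matrix (Fin n) (Fin n) ℝ)
    (hT₁ : ∀ j k, T₁ j k =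
      (1 / (2 * π)) * ∫ θ in (-π)..π, f₁ θ * Real.cos ((((j : ℤ) - (k : ℤ)) : ℝ) * θ))
    (hT₂ : ∀ j k, T₂ j k =
      (1 / (2 * π)) * ∫ θ in (-π)..π, f₂ θ * Real.cos ((((j : ℤ) - (k : ℤ)) : ℝ) * θ)) :
    T₁.PosDef ∧
    (∀ y : Fin n → ℝ, y ≠ 0 →
      l * (y ⬝ᵥ T₁ *ᵥ y) ≤ y ⬝ᵥ T₂ *ᵥ y ∧ y ⬝ᵥ T₂ *ᵥ y ≤ L * (y ⬝ᵥ T₁ *ᵥ y)) ∧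
    (l < L → ∀ y : Fin n → ℝ, y ≠ 0 →
      l * (y ⬝ᵥ T₁ *ᵥ y) < y ⬝ᵥ T₂ *ᵥ y ∧ y ⬝ᵥ T₂ *ᵥ y < L * (y ⬝ᵥ T₁ *ᵥ y)) ∧
    (∀ (μ : ℝ) (v : Fin n → ℝ), v ≠ 0 → (T₁⁻¹ * T₂) *ᵥ v = μ • v →
      (l ≤ μ ∧ μ ≤ L) ∧ (l < L → l < μ ∧ μ < L)) :=
  stmt_13_general f₁ f₂ hint₁ hint₂ hpos l L hbddBelow hbddAbove hl hL T₁ T₂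
    (Matrix.ext hT₁) (Matrix.ext hT₂)
end
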